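/- arXiv:2109.00359 — 5 statements merged into one kernel-verified Lean document; each statement's English description precedes it below -/
import Mathlib

section
/- Let τ be a positive integer, λ > 0 a real number and θ ∈ [0, π]. Then e^(i(τ+1)θ) − e^(iτθ) + λ = 0 holds if and only if there exists an integer k with 0 ≤ k ≤ ⌊τ/2⌋ such that θ = (π + 4kπ)/(2τ+1) and λ = 2·cos((πτ + 4kπτ)/(2τ+1)). -/
open Real

/-!
Write `φ = (2τ + 1)θ/2` and `s = sin (θ/2)`. Factoring out the half-angle,
`e^{i(τ+1)θ} - e^{iτθ} = 2 i s e^{iφ}`, so the equation says `2 s cos φ = 0` and `λ = 2 s sin φ`.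
As `λ > 0` and `s ≥ 0` on `[0, π]`, this forces `s > 0`, `cos φ = 0` and `sin φ = 1`, that is
`φ = π/2 + 2kπ`; the bounds on `θ` give `0 ≤ k ≤ ⌊τ/2⌋`. Finally `τθ = φ - θ/2`, so that
`cos (τθ) = s` whenever `sin φ = 1`, which identifies `λ = 2 s` with `2 cos (τθ)`.
-/

/-- Real and imaginary parts of the equation, after factoring out the half-angle. -/
lemma root_equation_iff (τ : ℕ) (lam θ : ℝ) :
    (Complex.exp (Complex.I * ((τ : ℂ) + 1) * θ) - Complex.exp (Complex.I * (τ : ℂ) * θ)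
        + (lam : ℂ) = 0) ↔
      lam = 2 * sin (θ / 2) * sin ((2 * τ + 1) * θ / 2) ∧
        2 * sin (θ / 2) * cos ((2 * τ + 1) * θ / 2) = 0 := by
  have e1 : Complex.I * ((τ : ℂ) + 1) * θ = (((2 * τ + 1) * θ / 2 + θ / 2 : ℝ) : ℂ) * Complex.I := by
    push_cast; ring
  have e2 : Complex.I * (τ : ℂ) * θ = (((2 * τ + 1) * θ / 2 - θ / 2 : ℝ) : ℂ) * Complex.I := by
    push_cast; ring
  rw [e1, e2, Complex.ext_iff]
  simp only [Complex.add_re, Complex.sub_re, Complex.add_im, Complex.sub_im,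
    Complex.exp_ofReal_mul_I_re, Complex.exp_ofReal_mul_I_im, Complex.ofReal_re,
    Complex.ofReal_im, Complex.zero_re, Complex.zero_im, cos_add, cos_sub, sin_add, sin_sub]
  constructor <;> rintro ⟨h1, h2⟩ <;> constructor <;> linarith

/-- When `sin φ = 1`, the gain `2 cos (τθ)` equals `2 sin (θ/2)`. -/
lemma cos_mul_eq_sin_half (τ : ℕ) (θ : ℝ) (h : sin ((2 * τ + 1) * θ / 2) = 1) :
    cos (τ * θ) = sin (θ / 2) := by
  have hc : cos ((2 * τ + 1) * θ / 2) = 0 := by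
    have := sin_sq_add_cos_sq ((2 * τ + 1) * θ / 2)
    rw [h] at this
    nlinarith
  have e : (τ : ℝ) * θ = (2 * τ + 1) * θ / 2 - θ / 2 := by ring
  rw [e, cos_sub, hc, h]; ring

/-- Characterization of unit-modulus roots `z = e^{iθ}`, `θ ∈ [0, π]`, of the
polynomial `z^(τ+1) - z^τ + λ` for positive gains `λ`. -/
theorem unit_circle_roots_characterization (τ : ℕ) (hτ : 1 ≤ τ) (lam : ℝ)
    (hlam : 0 < lam) (θ : ℝ) (hθ : θ ∈ Set.Icc (0 : ℝ) π) :
    (Complex.exp (Complex.I * ((τ : ℂ) + 1) * θ) - Complex.exp (Complex.I * (τ : ℂ) * θ)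
        + (lam : ℂ) = 0) ↔
      ∃ k : ℕ, k ≤ τ / 2 ∧ θ = (π + 4 * k * π) / (2 * τ + 1) ∧
        lam = 2 * Real.cos ((π * τ + 4 * k * π * τ) / (2 * τ + 1)) := by
  obtain ⟨h0, hπ⟩ := hθ
  have hpi := pi_pos
  have hd : (0 : ℝ) < 2 * τ + 1 := by positivity
  have harg (k : ℕ) (hk : θ = (π + 4 * k * π) / (2 * τ + 1)) :
      (π * τ + 4 * k * π * τ) / (2 * τ + 1) = τ * θ := by
    rw [hk]; ring
  rw [root_equation_iff]
  constructor
  · rintro ⟨h1, h2⟩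
    have hs : 0 ≤ sin (θ / 2) := sin_nonneg_of_nonneg_of_le_pi (by linarith) (by linarith)
    have hs0 : sin (θ / 2) ≠ 0 := by
      intro h; rw [h] at h1; linarith
    have hc : cos ((2 * τ + 1) * θ / 2) = 0 := by simpa [hs0] using h2
    have hφ : sin ((2 * τ + 1) * θ / 2) = 1 := by
      have hsq := sin_sq_add_cos_sq ((2 * τ + 1) * θ / 2)
      rw [hc] at hsq
      have : 0 < sin ((2 * τ + 1) * θ / 2) :=
        pos_of_mul_pos_right (h1 ▸ hlam) (by linarith)
      nlinarith
    obtain ⟨m, hm⟩ := (sin_eq_one_iff).1 hφ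
    have hmθ : (2 * τ + 1) * θ = (1 + 4 * m) * π := by linarith
    have hm0 : 0 ≤ m := by
      have : (-1 : ℝ) < m := by
        by_contra! h
        nlinarith [mul_nonneg hd.le h0]
      have : (-1 : ℤ) < m := by exact_mod_cast this
      omega
    lift m to ℕ using hm0
    have hmθ' : (2 * τ + 1) * θ = (1 + 4 * (m : ℝ)) * π := by exact_mod_cast hmθ
    have hθm : θ = (π + 4 * m * π) / (2 * τ + 1) := by
      rw [eq_div_iff hd.ne']; linarith
    refine ⟨m, ?_, hθm, ?_⟩
    · have : (1 + 4 * (m : ℝ)) ≤ 2 * τ + 1 := by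
        refine le_of_mul_le_mul_right ?_ hpi
        rw [← hmθ']
        exact mul_le_mul_of_nonneg_left hπ hd.le
      have : 1 + 4 * m ≤ 2 * τ + 1 := by exact_mod_cast this
      omega
    · rw [harg m hθm, cos_mul_eq_sin_half τ θ hφ, h1, hφ, mul_one]
  · rintro ⟨k, -, hk, hl⟩
    have hφk : (2 * τ + 1) * θ / 2 = π / 2 + k * (2 * π) := by
      rw [hk]; field_simp; ring
    have hφ : sin ((2 * τ + 1) * θ / 2) = 1 := by
      rw [hφk, sin_add_nat_mul_two_pi, sin_pi_div_two]
    have hc : cos ((2 * τ + 1) * θ / 2) = 0 := by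
      rw [hφk, cos_add_nat_mul_two_pi, cos_pi_div_two]
    rw [harg k hk, cos_mul_eq_sin_half τ θ hφ] at hl
    exact ⟨by rw [hφ, hl]; ring, by rw [hc, mul_zero]⟩
end

section
/- Let λ > 0 and τ > 0 be real numbers. Every complex number z satisfying the characteristic equation z + λ·e^(−τz) = 0 has strictly negative real part if and only if λτ < π/2. -/
/-!
Write `z = x + iy`; the equation says `x = -λ e^{-τx} cos (τy)` and `y = λ e^{-τx} sin (τy)`.

If `λτ < π/2` and `x ≥ 0`, the second equation gives `|τy| ≤ λτ < π/2`, so `cos (τy) > 0` and the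
first equation forces `x < 0`, a contradiction.

If `a = λτ ≥ π/2`, put `w = τz = u + iv` with `u = -v cos v / sin v`. On `v ∈ [π/2, π)` one has
`u ≥ 0`, and `w` solves `w = -a e^{-w}` as soon as `v e^u / sin v = a`. The left side is `π/2` at
`v = π/2` and at least `a` at `v = π - 1/a`, so the intermediate value theorem provides such a `v`
(`exists_angle`), hence a root with nonnegative real part.
-/

open Real

/-- The characteristic equation split into real and imaginary parts. -/
lemma char_eq_iff (lam τ : ℝ) (z : ℂ) :
    z + (lam : ℂ) * Complex.exp (-(τ : ℂ) * z) = 0 ↔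
      z.re + lam * (exp (-(τ * z.re)) * cos (τ * z.im)) = 0 ∧
      z.im - lam * (exp (-(τ * z.re)) * sin (τ * z.im)) = 0 := by
  rw [Complex.ext_iff]
  simp [Complex.exp_re, Complex.exp_im, sub_eq_add_neg]

lemma exists_angle (a : ℝ) (ha : π / 2 ≤ a) :
    ∃ v, π / 2 ≤ v ∧ v < π ∧ v * exp (-v * cos v / sin v) / sin v = a := by
  have hpi := pi_gt_three
  have ha0 : 0 < a := by linarith
  have hinv : 0 < 1 / a := by positivity
  have hinv1 : 1 / a ≤ 1 := by
    rw [div_le_one ha0]; linarith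
  have hsin : ∀ v ∈ Set.Icc (π / 2) (π - 1 / a), sin v ≠ 0 := fun v hv =>
    (sin_pos_of_pos_of_lt_pi (by linarith [hv.1]) (by linarith [hv.2])).ne'
  have hcont : ContinuousOn (fun v => v * exp (-v * cos v / sin v) / sin v)
      (Set.Icc (π / 2) (π - 1 / a)) := by
    refine ContinuousOn.div (ContinuousOn.mul continuousOn_id
      (ContinuousOn.rexp (ContinuousOn.div (by fun_prop) (by fun_prop) hsin)))
      (by fun_prop) hsin
  have hle : π / 2 ≤ π - 1 / a := by
    -- `1 / a ≤ 1 < π / 2`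
    linarith
  have hend : a ≤ (π - 1 / a) * exp (-(π - 1 / a) * cos (π - 1 / a) / sin (π - 1 / a)) /
      sin (π - 1 / a) := by
    rw [cos_pi_sub, sin_pi_sub]
    have hs : 0 < sin (1 / a) := sin_pos_of_pos_of_lt_pi hinv (by linarith)
    have hc : 0 < cos (1 / a) := cos_pos_of_mem_Ioo ⟨by linarith, by linarith⟩
    have hs1 : a * sin (1 / a) ≤ 1 := by
      have := mul_le_mul_of_nonneg_left (sin_le hinv.le) ha0.le
      rwa [mul_one_div_cancel ha0.ne'] at this
    have he : 1 ≤ exp (-(π - 1 / a) * -cos (1 / a) / sin (1 / a)) := by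
      apply one_le_exp
      rw [neg_mul_neg]
      exact div_nonneg (mul_nonneg (by linarith) hc.le) hs.le
    rw [le_div_iff₀ hs]
    nlinarith
  obtain ⟨v, hv, hva⟩ := intermediate_value_Icc hle hcont ⟨by simpa using ha, hend⟩
  exact ⟨v, hv.1, by linarith [hv.2], hva⟩

/-- Stability of the continuous-time delayed single integrator: every root of
`z + λ e^{-τz}` has negative real part iff `λτ < π/2`. -/
theorem continuous_single_integrator_stability (lam τ : ℝ) (hlam : 0 < lam) (hτ : 0 < τ) :
    (∀ z : ℂ, z + (lam : ℂ) * Complex.exp (-(τ : ℂ) * z) = 0 → z.re < 0) ↔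
      lam * τ < π / 2 := by
  constructor
  · intro h
    by_contra! hge
    obtain ⟨v, hv1, hv2, hv⟩ := exists_angle (lam * τ) hge
    have hpi := pi_pos
    have hs : 0 < sin v := sin_pos_of_pos_of_lt_pi (by linarith) hv2
    have hc : cos v ≤ 0 := cos_nonpos_of_pi_div_two_le_of_le hv1 (by linarith)
    set u := -v * cos v / sin v with hu
    have hu0 : 0 ≤ u := div_nonneg (by nlinarith) hs.le
    have hus : u * sin v = -v * cos v := by rw [hu]; field_simp
    have hv' : v * exp u = lam * τ * sin v := by
      rwa [div_eq_iff hs.ne'] at hv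
    have he : exp u * exp (-u) = 1 := by rw [← exp_add]; simp
    have hv3 : v = lam * τ * sin v * exp (-u) := by
      rw [← hv', mul_assoc, he, mul_one]
    have hu3 : u = -(lam * τ * cos v * exp (-u)) := by
      apply mul_right_cancel₀ hs.ne'
      rw [hus]
      linear_combination (-cos v) * hv3
    have hroot := h ⟨u / τ, v / τ⟩ ((char_eq_iff _ _ _).2 ⟨?_, ?_⟩)
    · exact absurd hroot (not_lt.2 (div_nonneg hu0 hτ.le))
    · simp only [mul_div_cancel₀ _ hτ.ne']
      field_simp
      linear_combination hu3
    · simp only [mul_div_cancel₀ _ hτ.ne']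
      field_simp
      linear_combination hv3
  · intro h z hz
    obtain ⟨h1, h2⟩ := (char_eq_iff _ _ _).1 hz
    by_contra! hx
    have he0 := exp_pos (-(τ * z.re))
    have he1 : exp (-(τ * z.re)) ≤ 1 := exp_le_one_iff.2 (by nlinarith)
    have hy : |z.im| ≤ lam := by
      rw [sub_eq_zero.1 h2, abs_mul, abs_mul, abs_of_pos hlam, abs_of_pos he0]
      exact mul_le_of_le_one_right hlam.le
        (mul_le_one₀ he1 (abs_nonneg _) (abs_sin_le_one _))
    obtain ⟨hy1, hy2⟩ := abs_le.1 hy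
    have hc : 0 < cos (τ * z.im) := cos_pos_of_mem_Ioo ⟨by nlinarith, by nlinarith⟩
    have : 0 < lam * (exp (-(τ * z.re)) * cos (τ * z.im)) := by positivity
    linarith
end

section
/- Let η > 0 and λ > 0 be real numbers, and let β be the unique solution in (0, π/2) of β·tan β = η. Then the following are equivalent: (i) for every real b > 0 with sin b > 0 and η·cos b = b·sin b, one has η²b² + b⁴ > η²λ²; (ii) λ < β / sin β. -/
open Real

/-!
If `η cos b = b sin b`, then `(η² + b²) sin² b = η² (sin² b + cos² b) = η²`, so
`(η² b² + b⁴) sin² b = η² b²`; hence at `b = β` the norm inequality says exactly `λ sin β < β`.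
Moreover `β` is the least positive solution of `η cos b = b sin b`, and `η² b² + b⁴` increases
with `b > 0`, so the inequality at `β` implies it at every other solution.
-/

theorem orthogonality_condition_iff_threshold (η lam β : ℝ)
    (hη : 0 < η) (hlam : 0 < lam)
    (hβ : β ∈ Set.Ioo (0 : ℝ) (π / 2)) (hβeq : β * Real.tan β = η) :
    (∀ b : ℝ, 0 < b → 0 < Real.sin b → η * Real.cos b = b * Real.sin b →
        η ^ 2 * b ^ 2 + b ^ 4 > η ^ 2 * lam ^ 2) ↔
      lam < β / Real.sin β := by
  obtain ⟨h0, h1⟩ := hβ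
  have hs : 0 < sin β := sin_pos_of_pos_of_lt_pi h0 (by linarith)
  have hc : 0 < cos β := cos_pos_of_mem_Ioo ⟨by linarith, h1⟩
  have hcs : η * cos β = β * sin β := by
    rw [← hβeq, mul_assoc, tan_mul_cos hc.ne']
  have key : (η ^ 2 * β ^ 2 + β ^ 4) * sin β ^ 2 = η ^ 2 * β ^ 2 := by
    linear_combination
      η ^ 2 * β ^ 2 * sin_sq_add_cos_sq β - β ^ 2 * (η * cos β + β * sin β) * hcs
  have hη2 : 0 < η ^ 2 := by positivity
  have hs2 : 0 < sin β ^ 2 := by positivity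
  have at_beta : η ^ 2 * lam ^ 2 < η ^ 2 * β ^ 2 + β ^ 4 ↔ lam < β / sin β := by
    rw [← mul_lt_mul_iff_left₀ hs2, key, mul_assoc, mul_lt_mul_iff_right₀ hη2, ← mul_pow,
      pow_lt_pow_iff_left₀ (by positivity) h0.le two_ne_zero, lt_div_iff₀ hs]
  rw [← at_beta]
  constructor
  · intro h
    exact h β h0 hs hcs
  · intro h b hb hsb hcb
    have hle : β ≤ b := by
      by_contra! hlt
      -- On `(0, π/2)` the left side of `η cos b = b sin b` decreases and the right side increases.
      have h2 : cos β < cos b := cos_lt_cos_of_nonneg_of_le_pi_div_two hb.le h1.le hlt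
      have h3 : sin b < sin β := sin_lt_sin_of_lt_of_le_pi_div_two (by linarith) h1.le hlt
      have h4 : b * sin b < β * sin β := mul_lt_mul'' hlt h3 hb.le hsb.le
      have h5 : η * cos β < η * cos b := mul_lt_mul_of_pos_left h2 hη
      linarith
    calc η ^ 2 * lam ^ 2 < η ^ 2 * β ^ 2 + β ^ 4 := h
      _ ≤ η ^ 2 * b ^ 2 + b ^ 4 := by gcongr
end

section
/- Let φ : (0, ∞) → (0, π/2) be the function such that φ(η)·tan(φ(η)) = η for every η > 0, and define Φ(η) = φ(η) / sin(φ(η)). Then Φ is strictly increasing and concave on (0, ∞). -/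
/-!
Put `x = φ η`, so that `η = x tan x` and `Φ = x / sin x`: the graph of `Φ` is a curve parametrized
by `x ∈ (0, π/2)`. Since `x tan x` and `x / sin x` are both increasing in `x`, `Φ` is increasing.

For concavity, Cauchy's mean value theorem writes the slope of any chord of the graph as
`G x = (sin x - x cos x) cos² x / (sin² x (sin x cos x + x))`, the quotient of the derivatives of
`x / sin x` and `x tan x`, at some intermediate `x`. This avoids differentiating `φ`, and reduces
concavity to `G` being decreasing (`slopeFun_antitoneOn`).

The sign of `G'` is that of a quadratic polynomial in `x` with coefficients in `sin x` and `cos x`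
(`key_ineq`), convex in `x` and nonpositive at `0`. It is also nonpositive at
`sin x * (1 + (ε + ε²) / 3)`, where `ε = 1 - cos x`, and this is an upper bound for `x`
(`le_sin_mul`).
-/

open Real

/-- The bound is sharp to first order in `1 - cos x` at `0`, as `key_ineq` requires. -/
lemma le_sin_mul {x : ℝ} (hx : x ∈ Set.Ioo (0 : ℝ) (π / 2)) :
    x ≤ sin x * (1 + ((1 - cos x) + (1 - cos x) ^ 2) / 3) := by
  let f : ℝ → ℝ := fun y => sin y * (1 + ((1 - cos y) + (1 - cos y) ^ 2) / 3) - y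
  have hd : ∀ y, HasDerivAt f ((1 - cos y) ^ 2 * cos y) y := by
    intro y
    have h1 : HasDerivAt (fun y => 1 - cos y) (sin y) y := by
      simpa using (hasDerivAt_cos y).const_sub 1
    have := ((hasDerivAt_sin y).mul
      (((h1.add (h1.pow 2)).div_const 3).const_add 1)).sub (hasDerivAt_id y)
    refine HasDerivAt.congr_deriv this ?_
    simp only [Pi.add_apply, Pi.pow_apply]
    push_cast
    linear_combination (1 / 3 + (2 / 3) * (1 - cos y)) * sin_sq_add_cos_sq y
  have hmono : MonotoneOn f (Set.Icc 0 (π / 2)) := by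
    refine monotoneOn_of_deriv_nonneg (convex_Icc _ _)
      (fun y _ => (hd y).continuousAt.continuousWithinAt)
      (fun y _ => (hd y).differentiableAt.differentiableWithinAt) fun y hy => ?_
    rw [interior_Icc] at hy
    rw [(hd y).deriv]
    have := cos_pos_of_mem_Ioo (x := y) ⟨by linarith [hy.1, pi_pos], hy.2⟩
    positivity
  have h := hmono (Set.left_mem_Icc.2 (by positivity)) (Set.Ioo_subset_Icc_self hx) hx.1.le
  simp only [f, sin_zero] at h
  linarith

lemma sin_sub_mul_cos_pos {x : ℝ} (hx : x ∈ Set.Ioo (0 : ℝ) (π / 2)) :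
    0 < sin x - x * cos x := by
  have hc : 0 < cos x := cos_pos_of_mem_Ioo ⟨by linarith [hx.1, pi_pos], hx.2⟩
  have h := lt_tan hx.1 hx.2
  rw [tan_eq_sin_div_cos, lt_div_iff₀ hc] at h
  linarith

/-- Up to a positive factor, the left side minus the right side is the derivative of `slopeFun`. -/
lemma key_ineq {x : ℝ} (hx : x ∈ Set.Ioo (0 : ℝ) (π / 2)) :
    x * sin x ^ 2 * cos x * (sin x * cos x + x) ≤
      2 * (sin x - x * cos x) * (sin x * cos x + x + sin x * cos x ^ 3) := by
  have hc : 0 < cos x := cos_pos_of_mem_Ioo ⟨by linarith [hx.1, pi_pos], hx.2⟩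
  have hs : 0 < sin x := sin_pos_of_pos_of_lt_pi hx.1 (by linarith [hx.2, pi_pos])
  have hb := le_sin_mul hx
  have hc1 := cos_le_one x
  have hsc := sin_sq_add_cos_sq x
  have hx0 := hx.1
  generalize sin x = s at *
  generalize cos x = c at *
  set p : ℝ := 1 + ((1 - c) + (1 - c) ^ 2) / 3 with hp
  have hp0 : 0 < p := by have : 0 ≤ 1 - c := by linarith
                         positivity
  have ha : 0 ≤ c * (3 - c ^ 2) := mul_nonneg hc.le (by nlinarith)
  have hQ : p ^ 2 * (c * (3 - c ^ 2)) + p * (c ^ 4 + 3 * c ^ 2 - 2) - 2 * c * (1 + c ^ 2) ≤ 0 := by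
    obtain ⟨e, he⟩ : ∃ e, e = 1 - c := ⟨_, rfl⟩
    obtain rfl : c = 1 - e := by linarith
    have he0 : 0 ≤ e := by linarith
    have he1 : e ≤ 1 := by linarith
    have h2 : e ^ 2 ≤ 1 := pow_le_one₀ he0 he1
    have h4 : e ^ 4 ≤ 1 := pow_le_one₀ he0 he1
    have h5 : e ^ 5 ≤ e := pow_le_of_le_one he0 he1 (by norm_num)
    have h22 : e ^ 2 ≤ e := pow_le_of_le_one he0 he1 (by norm_num)
    have h44 : e ^ 4 ≤ e := pow_le_of_le_one he0 he1 (by norm_num)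
    have h3 : 0 ≤ e ^ 3 := by positivity
    have hR : -10 - 26 * e + 11 * e ^ 2 - 8 * e ^ 3 + 2 * e ^ 4 + e ^ 5 ≤ 0 := by linarith
    have := mul_nonpos_of_nonneg_of_nonpos (sq_nonneg e) hR
    rw [hp]
    nlinarith [this]
  have hsp : 0 < s * p := by positivity
  -- A convex quadratic lies below its chord over `[0, s * p]`.
  have hchord : s * p * (x ^ 2 * (c * (3 - c ^ 2)) + x * s * (c ^ 4 + 3 * c ^ 2 - 2)
      - 2 * s ^ 2 * c * (1 + c ^ 2)) ≤ 0 := by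
    have h1 : x * s ^ 2 * (p ^ 2 * (c * (3 - c ^ 2)) + p * (c ^ 4 + 3 * c ^ 2 - 2)
        - 2 * c * (1 + c ^ 2)) ≤ 0 := mul_nonpos_of_nonneg_of_nonpos (by positivity) hQ
    have h2 : 0 ≤ (s * p - x) * (2 * s ^ 2 * c * (1 + c ^ 2)) :=
      mul_nonneg (by linarith) (by positivity)
    have h3 : 0 ≤ c * (3 - c ^ 2) * (x * (s * p) * (s * p - x)) :=
      mul_nonneg ha (mul_nonneg (by positivity) (by linarith))
    linarith
  have hK := nonpos_of_mul_nonpos_right hchord hsp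
  have hs2 : s ^ 2 = 1 - c ^ 2 := by linarith
  have hs3 : s ^ 3 = s * (1 - c ^ 2) := by rw [← hs2]; ring
  have e1 : x * s ^ 2 * c * (s * c + x) - 2 * (s - x * c) * (s * c + x + s * c ^ 3) =
      x ^ 2 * (c * (3 - c ^ 2)) + x * s * (c ^ 4 + 3 * c ^ 2 - 2)
      - 2 * s ^ 2 * c * (1 + c ^ 2) := by
    linear_combination (x ^ 2 * c) * hs2 + x * c ^ 2 * hs3
  linarith

/-- The quotient of the derivatives of `x / sin x` and `x * tan x`, that is, the slope `dΦ/dη` of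
the threshold in terms of `x = φ η`. -/
noncomputable def slopeFun (x : ℝ) : ℝ :=
  (sin x - x * cos x) * cos x ^ 2 / (sin x ^ 2 * (sin x * cos x + x))

lemma slopeFun_antitoneOn : AntitoneOn slopeFun (Set.Ioo 0 (π / 2)) := by
  have hd : ∀ x ∈ Set.Ioo (0 : ℝ) (π / 2), ∃ d ≤ 0, HasDerivAt slopeFun d x := by
    intro x hx
    have hc : 0 < cos x := cos_pos_of_mem_Ioo ⟨by linarith [hx.1, pi_pos], hx.2⟩
    have hs : 0 < sin x := sin_pos_of_pos_of_lt_pi hx.1 (by linarith [hx.2, pi_pos])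
    have hx0 := hx.1
    have hN := ((hasDerivAt_sin x).sub ((hasDerivAt_id x).mul (hasDerivAt_cos x))).mul
      ((hasDerivAt_cos x).pow 2)
    have hD := ((hasDerivAt_sin x).pow 2).mul
      (((hasDerivAt_sin x).mul (hasDerivAt_cos x)).add (hasDerivAt_id x))
    have hne : sin x ^ 2 * (sin x * cos x + x) ≠ 0 := by positivity
    refine ⟨_, ?_, hN.div hD hne⟩
    refine div_nonpos_of_nonpos_of_nonneg ?_ (sq_nonneg _)
    have hk := mul_nonpos_of_nonneg_of_nonpos (mul_pos hs hc).le (sub_nonpos.2 (key_ineq hx))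
    refine le_of_eq_of_le ?_ hk
    simp only [Pi.add_apply, Pi.sub_apply, Pi.mul_apply, Pi.pow_apply, id]
    push_cast
    have hs2 : sin x ^ 2 = 1 - cos x ^ 2 := by linarith [sin_sq_add_cos_sq x]
    generalize sin x = s at *
    generalize cos x = c at *
    linear_combination (-2 * c * s * (s - x * c) * (s * c + x) +
      (s - x * c) * c ^ 2 * s ^ 2) * hs2
  refine antitoneOn_of_deriv_nonpos (convex_Ioo _ _) (fun x hx => ?_) (fun x hx => ?_)
    fun x hx => ?_
  · obtain ⟨d, -, h⟩ := hd x hx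
    exact h.continuousAt.continuousWithinAt
  · obtain ⟨d, -, h⟩ := hd x (interior_subset hx)
    exact h.differentiableAt.differentiableWithinAt
  · obtain ⟨d, h0, h⟩ := hd x (interior_subset hx)
    rwa [h.deriv]

lemma hasDerivAt_div_sin {x : ℝ} (hx : x ∈ Set.Ioo (0 : ℝ) (π / 2)) :
    HasDerivAt (fun y => y / sin y) ((sin x - x * cos x) / sin x ^ 2) x := by
  have hs : 0 < sin x := sin_pos_of_pos_of_lt_pi hx.1 (by linarith [hx.2, pi_pos])
  refine HasDerivAt.congr_deriv ((hasDerivAt_id x).div (hasDerivAt_sin x) hs.ne') ?_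
  simp

lemma hasDerivAt_mul_tan {x : ℝ} (hx : x ∈ Set.Ioo (0 : ℝ) (π / 2)) :
    HasDerivAt (fun y => y * tan y) ((sin x * cos x + x) / cos x ^ 2) x := by
  have hc : 0 < cos x := cos_pos_of_mem_Ioo ⟨by linarith [hx.1, pi_pos], hx.2⟩
  refine HasDerivAt.congr_deriv ((hasDerivAt_id x).mul (hasDerivAt_tan hc.ne')) ?_
  rw [tan_eq_sin_div_cos]
  simp only [id]
  field_simp

lemma div_sin_strictMonoOn : StrictMonoOn (fun x => x / sin x) (Set.Ioo 0 (π / 2)) := by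
  refine strictMonoOn_of_deriv_pos (convex_Ioo _ _)
    (fun x hx => (hasDerivAt_div_sin hx).continuousAt.continuousWithinAt) fun x hx => ?_
  replace hx := interior_subset hx
  have hs : 0 < sin x := sin_pos_of_pos_of_lt_pi hx.1 (by linarith [hx.2, pi_pos])
  have := sin_sub_mul_cos_pos hx
  rw [(hasDerivAt_div_sin hx).deriv]
  positivity

lemma mul_tan_strictMonoOn : StrictMonoOn (fun x => x * tan x) (Set.Ioo 0 (π / 2)) := by
  intro x hx y hy hxy
  exact mul_lt_mul'' hxy (tan_lt_tan_of_nonneg_of_lt_pi_div_two hx.1.le hy.2 hxy) hx.1.le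
    (tan_pos_of_pos_of_lt_pi_div_two hx.1 hx.2).le

lemma exists_slopeFun_eq {a b : ℝ} (ha : a ∈ Set.Ioo (0 : ℝ) (π / 2))
    (hb : b ∈ Set.Ioo (0 : ℝ) (π / 2)) (hab : a < b) :
    ∃ t ∈ Set.Ioo a b,
      (b / sin b - a / sin a) / (b * tan b - a * tan a) = slopeFun t := by
  have hsub : Set.Icc a b ⊆ Set.Ioo 0 (π / 2) := Set.Icc_subset_Ioo ha.1 hb.2
  obtain ⟨t, ht, h⟩ := exists_ratio_hasDerivAt_eq_ratio_slope _ _ hab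
    (fun x hx => (hasDerivAt_div_sin (hsub hx)).continuousAt.continuousWithinAt)
    (fun x hx => hasDerivAt_div_sin (hsub (Set.Ioo_subset_Icc_self hx))) _ _
    (fun x hx => (hasDerivAt_mul_tan (hsub hx)).continuousAt.continuousWithinAt)
    (fun x hx => hasDerivAt_mul_tan (hsub (Set.Ioo_subset_Icc_self hx)))
  refine ⟨t, ht, ?_⟩
  have ht' := hsub (Set.Ioo_subset_Icc_self ht)
  have hc : 0 < cos t := cos_pos_of_mem_Ioo ⟨by linarith [ht'.1, pi_pos], ht'.2⟩
  have hs : 0 < sin t := sin_pos_of_pos_of_lt_pi ht'.1 (by linarith [ht'.2, pi_pos])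
  have ht0 := ht'.1
  have hw : 0 < sin t * cos t + t := by positivity
  have hg : 0 < b * tan b - a * tan a := sub_pos.2 (mul_tan_strictMonoOn ha hb hab)
  rw [slopeFun, div_eq_div_iff hg.ne' (by positivity)]
  field_simp at h
  linarith

/-- The stability threshold `Φ(η) = φ(η)/sin(φ(η))`, where `φ(η) ∈ (0, π/2)`
satisfies `φ(η) tan(φ(η)) = η`, is strictly increasing and concave on `(0, ∞)`. -/
theorem threshold_strictMono_concave (φ : ℝ → ℝ)
    (hφ : ∀ η : ℝ, 0 < η → φ η ∈ Set.Ioo (0 : ℝ) (π / 2) ∧ φ η * Real.tan (φ η) = η) :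
    StrictMonoOn (fun η : ℝ => φ η / Real.sin (φ η)) (Set.Ioi 0) ∧
    ConcaveOn ℝ (Set.Ioi 0) (fun η : ℝ => φ η / Real.sin (φ η)) := by
  have hmono : ∀ x y : ℝ, 0 < x → x < y → φ x < φ y := by
    intro x y hx hxy
    obtain ⟨h1, e1⟩ := hφ x hx
    obtain ⟨h2, e2⟩ := hφ y (hx.trans hxy)
    refine (mul_tan_strictMonoOn.lt_iff_lt h1 h2).1 ?_
    simpa only [e1, e2] using hxy
  refine ⟨fun x hx y hy hxy => div_sin_strictMonoOn (hφ x hx).1 (hφ y hy).1 (hmono x y hx hxy), ?_⟩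
  refine concaveOn_of_slope_anti_adjacent (convex_Ioi 0) ?_
  intro x y z hx hz hxy hyz
  have hx' : 0 < x := hx
  have hy' : 0 < y := hx'.trans hxy
  obtain ⟨h1, e1⟩ := hφ x hx
  obtain ⟨h2, e2⟩ := hφ y hy'
  obtain ⟨h3, e3⟩ := hφ z hz
  obtain ⟨t, ht, et⟩ := exists_slopeFun_eq h1 h2 (hmono x y hx' hxy)
  obtain ⟨u, hu, eu⟩ := exists_slopeFun_eq h2 h3 (hmono y z hy' hyz)
  rw [e1, e2] at et
  rw [e2, e3] at eu
  simp only [et, eu]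
  exact slopeFun_antitoneOn ⟨h1.1.trans ht.1, ht.2.trans h2.2⟩ ⟨h2.1.trans hu.1, hu.2.trans h3.2⟩
    (ht.2.trans hu.1).le
end

section
/- Let φ : (0, ∞) → (0, π/2) be the function such that φ(η)·tan(φ(η)) = η for every η > 0, and define Φ(η) = φ(η) / sin(φ(η)). Then φ(η) → 0 and Φ(η) → 1 as η → 0⁺, and φ(η) → π/2 and Φ(η) → π/2 as η → +∞. -/
open Real Filter

/-!
Two explicit bounds on `φ(η)` give the limits. Since `tan x ≥ x` on `(0, π/2)`, the defining
equation yields `φ(η)² ≤ η`, hence `φ(η) → 0` at `0⁺`. Multiplying it by `cos φ(η)` gives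
`η cos φ(η) = φ(η) sin φ(η) ≤ π/2`, and the chord bound `cos x ≥ 1 - 2x/π` (concavity of the
cosine) turns this into `π/2 - φ(η) ≤ (π/2)²/η`, hence `φ(η) → π/2` at `+∞`. The limits of
`φ/sin φ` follow by continuity, the singularity at `0` being removed by
`φ/sin φ = (sinc φ)⁻¹`.
-/

/-- Limits of `φ` and of the threshold `Φ(η) = φ(η)/sin(φ(η))` at `0⁺` and `+∞`,
where `φ(η) ∈ (0, π/2)` satisfies `φ(η) tan(φ(η)) = η`. -/
theorem phi_threshold_limits (φ : ℝ → ℝ)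
    (hφ : ∀ η : ℝ, 0 < η → φ η ∈ Set.Ioo (0 : ℝ) (π / 2) ∧ φ η * Real.tan (φ η) = η) :
    Tendsto φ (nhdsWithin 0 (Set.Ioi 0)) (nhds 0) ∧
    Tendsto (fun η : ℝ => φ η / Real.sin (φ η)) (nhdsWithin 0 (Set.Ioi 0)) (nhds 1) ∧
    Tendsto φ atTop (nhds (π / 2)) ∧
    Tendsto (fun η : ℝ => φ η / Real.sin (φ η)) atTop (nhds (π / 2)) := by
  have h0 : Tendsto φ (nhdsWithin 0 (Set.Ioi 0)) (nhds 0) := by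
    have hs : Tendsto (fun η : ℝ => √η) (nhdsWithin 0 (Set.Ioi 0)) (nhds 0) := by
      have := (Real.continuous_sqrt.tendsto 0).mono_left
        (nhdsWithin_le_nhds (s := Set.Ioi (0 : ℝ)))
      rwa [Real.sqrt_zero] at this
    refine tendsto_of_tendsto_of_tendsto_of_le_of_le' tendsto_const_nhds hs ?_ ?_
    · filter_upwards [self_mem_nhdsWithin] with η hη
      exact (hφ η hη).1.1.le
    · filter_upwards [self_mem_nhdsWithin] with η hη
      obtain ⟨⟨hpos, hlt⟩, heq⟩ := hφ η hη
      apply Real.le_sqrt_of_sq_le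
      nlinarith [Real.lt_tan hpos hlt]
  have hinf : Tendsto φ atTop (nhds (π / 2)) := by
    have hl : Tendsto (fun η : ℝ => π / 2 - (π / 2) ^ 2 / η) atTop (nhds (π / 2)) := by
      simpa using (tendsto_const_nhds (x := π / 2)).sub
        (tendsto_const_nhds (x := (π / 2) ^ 2) |>.div_atTop tendsto_id)
    refine tendsto_of_tendsto_of_tendsto_of_le_of_le' hl tendsto_const_nhds ?_ ?_
    · filter_upwards [eventually_gt_atTop 0] with η hη
      obtain ⟨⟨hpos, hlt⟩, heq⟩ := hφ η hη
      have hcos : 0 < Real.cos (φ η) := Real.cos_pos_of_mem_Ioo ⟨by linarith, hlt⟩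
      have hmul : η * Real.cos (φ η) = φ η * Real.sin (φ η) := by
        rw [← Real.tan_mul_cos hcos.ne', ← mul_assoc, heq]
      have hchord := Real.one_sub_mul_le_cos hpos.le hlt.le
      have hbound : η * Real.cos (φ η) ≤ π / 2 := by
        rw [hmul]
        nlinarith [Real.sin_le_one (φ η)]
      have hgap : π / 2 - φ η ≤ π / 2 * Real.cos (φ η) := by
        calc π / 2 - φ η = π / 2 * (1 - 2 / π * φ η) := by field_simp
          _ ≤ _ := by gcongr
      have : π / 2 - φ η ≤ (π / 2) ^ 2 / η := by
        rw [le_div_iff₀ hη]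
        nlinarith [Real.pi_pos]
      linarith
    · filter_upwards [eventually_gt_atTop 0] with η hη
      exact (hφ η hη).1.2.le
  refine ⟨h0, ?_, hinf, ?_⟩
  · have hsinc := ((Real.continuous_sinc.tendsto 0).comp h0).inv₀ (by simp)
    rw [Real.sinc_zero, inv_one] at hsinc
    refine hsinc.congr' ?_
    filter_upwards [self_mem_nhdsWithin] with η hη
    simp [Real.sinc_of_ne_zero (hφ η hη).1.1.ne']
  · have h := hinf.div ((Real.continuous_sin.tendsto (π / 2)).comp hinf) (by simp)
    rw [Real.sin_pi_div_two, div_one] at h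
    exact h
end
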